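/- Let μ̂ be a probability measure on X̂ that is invariant and ergodic under the record-shift θ̂, with μ̂(r) < ∞. Then the inverse-Palm measure Palm(μ̂) is ergodic under the shift θ. -/

import Mathlib

open MeasureTheory Filter Finset

/-- A ball configuration: a box at each integer, occupied (`true`) or empty (`false`). -/
abbrev Cfg := ℤ → Bool

/-- Numerical (integer) value of a box. -/
def valZ (b : Bool) : ℤ := if b then 1 else 0

/-- Numerical (real) value of a box. -/
def valR (b : Bool) : ℝ := if b then 1 else 0

/-- `x` is a record of the configuration `η`:
for every `z ≤ x`, the number of balls in `[z,x]` is strictly smaller than the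
number of empty boxes in `[z,x]`. -/
def isRecord (η : Cfg) (x : ℤ) : Prop :=
  ∀ z ≤ x, (∑ y ∈ Finset.Icc z x, valZ (η y)) < ∑ y ∈ Finset.Icc z x, (1 - valZ (η y))

open Classical in
/-- The box-ball (Takahashi–Satsuma) operator `T`. -/
noncomputable def bbsT (η : Cfg) : Cfg := fun x => if isRecord η x then false else !(η x)

/-- `η` has asymptotic density `lam` of balls on both half lines. -/
def inXlam (lam : ℝ) (η : Cfg) : Prop :=
  Tendsto (fun y : ℕ => (∑ x ∈ Finset.Icc (-(y : ℤ)) 0, valR (η x)) / (y : ℝ))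
    atTop (nhds lam) ∧
  Tendsto (fun y : ℕ => (∑ x ∈ Finset.Icc (0 : ℤ) (y : ℤ), valR (η x)) / (y : ℝ))
    atTop (nhds lam)

/-- `η ∈ 𝒳`: it has a well-defined density `0 < lam < 1/2`. -/
def inX (η : Cfg) : Prop := ∃ lam : ℝ, 0 < lam ∧ lam < 1 / 2 ∧ inXlam lam η

/-- `ξ` is a walk lift of the configuration `η`. -/
def IsLift (η : Cfg) (ξ : ℤ → ℤ) : Prop :=
  ∀ x : ℤ, ξ x - ξ (x - 1) = 2 * valZ (η x) - 1

/-- Running minimum `min_{y ≤ x} ξ(y)` of a walk. -/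
noncomputable def runMin (ξ : ℤ → ℤ) (x : ℤ) : ℤ := sInf (ξ '' Set.Iic x)

/-- The box-ball operator on walks: reflection at the running minimum. -/
noncomputable def liftT (ξ : ℤ → ℤ) : ℤ → ℤ := fun x => 2 * runMin ξ x - ξ x

/-- The canonical walk lift of `η` with value `0` at the origin. -/
noncomputable def xi0 (η : Cfg) : ℤ → ℤ := fun x =>
  if 0 ≤ x then ∑ y ∈ Finset.Icc 1 x, (2 * valZ (η y) - 1)
  else -∑ y ∈ Finset.Icc (x + 1) 0, (2 * valZ (η y) - 1)
/-- Maximal runs of a word of (position, letter) pairs. -/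
def runsOf : List (ℤ × Bool) → List (List (ℤ × Bool))
  | [] => []
  | a :: l =>
    match runsOf l with
    | [] => [[a]]
    | r :: rs =>
      if (r.head?.map Prod.snd) = some a.2 then (a :: r) :: rs else [a] :: r :: rs

/-- Takahashi–Satsuma step: find the leftmost run whose length is at least the
length of the run preceding it; the soliton consists of the preceding run
together with the first (that many) letters of the selected run. -/
def findSoliton : List (List (ℤ × Bool)) → Option (List (ℤ × Bool))
  | r1 :: r2 :: rest =>
    if r1.length ≤ r2.length then some (r1 ++ r2.take r1.length)
    else findSoliton (r2 :: rest)
  | _ => none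

/-- Iterated Takahashi–Satsuma algorithm (with fuel): repeatedly identify the
soliton given by `findSoliton` and remove its letters from the word. -/
def tsAux : ℕ → List (ℤ × Bool) → List (List (ℤ × Bool))
  | 0, _ => []
  | fuel + 1, w =>
    match findSoliton (runsOf w) with
    | none => []
    | some s => s :: tsAux fuel (w.filter (fun a => !((s.map Prod.fst).contains a.1)))

/-- The solitons identified by the Takahashi–Satsuma algorithm in a finite word. -/
def tsSolitons (w : List (ℤ × Bool)) : List (List (ℤ × Bool)) := tsAux w.length w

/-- The word (with positions) strictly between sites `y1` and `y2`. -/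
def excursionWord (η : Cfg) (y1 y2 : ℤ) : List (ℤ × Bool) :=
  (List.range (y2 - y1 - 1).toNat).map fun n => (y1 + 1 + n, η (y1 + 1 + n))

/-- `Γ_k η`: the set of `k`-solitons of `η`, each identified with the set of `2k`
sites it occupies.  A `k`-soliton is obtained by applying the Takahashi–Satsuma
algorithm to an excursion of `η` (the word between two consecutive records). -/
def Gamma (η : Cfg) (k : ℕ) : Set (Finset ℤ) :=
  {γ | ∃ y1 y2 : ℤ, y1 < y2 ∧ isRecord η y1 ∧ isRecord η y2 ∧
    (∀ z : ℤ, y1 < z → z < y2 → ¬ isRecord η z) ∧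
    ∃ s ∈ tsSolitons (excursionWord η y1 y2), s.length = 2 * k ∧
      γ = (s.map Prod.fst).toFinset}

/-- The head of a soliton `γ` of `η`: the positions of its ones. -/
def headF (η : Cfg) (γ : Finset ℤ) : Finset ℤ := γ.filter fun x => η x = true

/-- The tail of a soliton `γ` of `η`: the positions of its zeros. -/
def tailF (η : Cfg) (γ : Finset ℤ) : Finset ℤ := γ.filter fun x => η x = false
/-- `x` is a `k`-slot of `η`: either a record, or the `j`-th smallest site of the
tail or of the head of some soliton, with `j > k` (slot level `j - 1 ≥ k`). -/
def IsKSlot (η : Cfg) (k : ℕ) (x : ℤ) : Prop :=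
  isRecord η x ∨ ∃ m : ℕ, ∃ γ ∈ Gamma η m,
    (x ∈ tailF η γ ∧ k < ((tailF η γ).filter fun y => y ≤ x).card) ∨
    (x ∈ headF η γ ∧ k < ((headF η γ).filter fun y => y ≤ x).card)

open Classical in
/-- Increasing enumeration of a (doubly unbounded, locally finite) set `S ⊆ ℤ`,
normalized so that the `0`-th element is the base point `b`.  (Junk value if no
such enumeration exists.) -/
noncomputable def enumZ (S : Set ℤ) (b : ℤ) : ℤ → ℤ :=
  if h : ∃ f : ℤ → ℤ, StrictMono f ∧ f 0 = b ∧ Set.range f = S then h.choose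
  else fun _ => 0

/-- Position `r(ξ,j)` of Record `j` of a walk `ξ`: leftmost site where `ξ` takes
the value `-j`. -/
noncomputable def recPos (ξ : ℤ → ℤ) (j : ℤ) : ℤ := sInf {x : ℤ | ξ x = -j}

/-- `s_k(ξ,i)`: the `i`-th `k`-slot of the configuration `η` lifted by the walk
`ξ`, enumerated increasingly and normalized by `s_k(ξ,0) = r(ξ,0)`. -/
noncomputable def skEnum (η : Cfg) (ξ : ℤ → ℤ) (k : ℕ) : ℤ → ℤ :=
  enumZ {x : ℤ | IsKSlot η k x} (recPos ξ 0)

/-- `M_k ξ (i)`: the number of `k`-solitons appended to the `i`-th `k`-slot,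
i.e. contained in `[s_k(ξ,i)+1, s_k(ξ,i+1)-1]`. -/
noncomputable def Mk (η : Cfg) (ξ : ℤ → ℤ) (k : ℕ) (i : ℤ) : ℕ :=
  Set.ncard {γ | γ ∈ Gamma η k ∧
    ∀ x ∈ γ, skEnum η ξ k i < x ∧ x < skEnum η ξ k (i + 1)}

open Classical in
/-- The trajectory `γ^t` of a tagged `k`-soliton `γ` of `η`: `γ^0 = γ` and
`γ^{t+1}` is the `k`-soliton of `T^{t+1} η` whose head is the tail of `γ^t`. -/
noncomputable def solTraj (η : Cfg) (k : ℕ) (γ : Finset ℤ) : ℕ → Finset ℤ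
  | 0 => γ
  | t + 1 =>
    if h : ∃ γ' ∈ Gamma (bbsT^[t + 1] η) k,
        headF (bbsT^[t + 1] η) γ' = tailF (bbsT^[t] η) (solTraj η k γ t)
    then h.choose else ∅

/-- `J_m^t ξ`: the flow of `m`-solitons through Record `0` by time `t`. -/
noncomputable def Jflow (η : Cfg) (ξ : ℤ → ℤ) (m : ℕ) (t : ℕ) : ℕ :=
  Set.ncard {γ | γ ∈ Gamma η m ∧ (∀ x ∈ γ, x < recPos ξ 0) ∧
    ∀ x ∈ solTraj η m γ t, recPos (liftT^[t] ξ) 0 ≤ x}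

/-- `o_k^t(ξ) = Σ_{m>k} 2(m-k)·J_m^t ξ`: the flow of `k`-slots through Record
`0` by time `t`, counted as the number of pairs (an `m`-soliton `γ` with `m > k`
crossing Record `0` by time `t`, a site of `γ` of slot level `≥ k`); each such
`γ` carries exactly `2(m-k)` such sites. -/
noncomputable def oOff (η : Cfg) (ξ : ℤ → ℤ) (k : ℕ) (t : ℕ) : ℕ :=
  Set.ncard {p : Finset ℤ × ℤ | ∃ m : ℕ, k < m ∧ p.1 ∈ Gamma η m ∧
    (∀ x ∈ p.1, x < recPos ξ 0) ∧
    (∀ x ∈ solTraj η m p.1 t, recPos (liftT^[t] ξ) 0 ≤ x) ∧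
    ((p.2 ∈ tailF η p.1 ∧ k < ((tailF η p.1).filter fun y => y ≤ p.2).card) ∨
     (p.2 ∈ headF η p.1 ∧ k < ((headF η p.1).filter fun y => y ≤ p.2).card))}

/-- The relabeled `i`-th `k`-slot at time `t`:
`s_k^t(ξ,i) = s_k(T^t ξ, o_k^t(ξ) + i)`. -/
noncomputable def skEnumT (η : Cfg) (ξ : ℤ → ℤ) (k : ℕ) (t : ℕ) (i : ℤ) : ℤ :=
  skEnum (bbsT^[t] η) (liftT^[t] ξ) k ((oOff η ξ k t : ℤ) + i)
/-- The shift `θ` on configurations: `θη(y) = η(y+1)`. -/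
def shiftC (η : Cfg) : Cfg := fun y => η (y + 1)

/-- The shift by `n`: `θ^n η (y) = η (y + n)`. -/
def shiftBy (n : ℤ) (η : Cfg) : Cfg := fun y => η (y + n)

/-- The shift on `ℕ^ℤ` (soliton components). -/
def shiftN (z : ℤ → ℕ) : ℤ → ℕ := fun i => z (i + 1)

/-- `r(η)`: the position of the first record of `η` in `[1,∞)`. -/
noncomputable def rFirst (η : Cfg) : ℤ := sInf {x : ℤ | 1 ≤ x ∧ isRecord η x}

/-- The record-shift `θ̂ η = θ^{r(η)} η`. -/
noncomputable def thetaHat (η : Cfg) : Cfg := shiftBy (rFirst η) η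

/-- The dynamics seen from a record, `T̂ η = θ^{ψ_η(0)} (Tη)` where `ψ_η(0)` is
the position of Record `0` of `Tξ` for the canonical lift `ξ = ξ°[η]`. -/
noncomputable def That (η : Cfg) : Cfg := shiftBy (recPos (liftT (xi0 η)) 0) (bbsT η)

/-- The set `𝒳` of configurations with density in `(0,1/2)`. -/
def Xset : Set Cfg := {η | inX η}

/-- The set `𝒳̂` of configurations in `𝒳` having a record at the origin. -/
def XhatSet : Set Cfg := {η | inX η ∧ isRecord η 0}

/-- The `k`-component of a configuration (seen from its canonical lift `ξ°[η]`,
which for `η ∈ 𝒳̂` has Record `0` at the origin). -/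
noncomputable def MkHat (η : Cfg) (k : ℕ) (i : ℤ) : ℕ := Mk η (xi0 η) k i

/-- `μ` is the inverse-Palm measure of `μ̂`:
`μ(A) = μ̂(r)⁻¹ · ∫ Σ_{i=1}^{r(η)} 1_A(θ^i η) dμ̂`. -/
def PalmIdentity (muhat mu : MeasureTheory.Measure Cfg) : Prop :=
  ∀ A : Set Cfg, MeasurableSet A →
    mu A = (∫⁻ η, ((rFirst η).toNat : ENNReal) ∂muhat)⁻¹ *
      ∫⁻ η, ∑ i ∈ Finset.Icc (1 : ℤ) (rFirst η),
        A.indicator (fun _ => (1 : ENNReal)) (shiftBy i η) ∂muhat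

/-- The number of `k`-solitons in the excursion of `η` between Records 0 and 1
(i.e. contained in `(0, r(η))`), for `η` with a record at the origin. -/
noncomputable def excCount (η : Cfg) (k : ℕ) : ℕ :=
  Set.ncard {γ | γ ∈ Gamma η k ∧ ∀ x ∈ γ, 0 < x ∧ x < rFirst η}

/-- `ρ_k`: the mean number of `k`-solitons per excursion, under
`μ̂ = μ( · | 0 ∈ Rη)`. -/
noncomputable def rhoK (mu : MeasureTheory.Measure Cfg) (k : ℕ) : ℝ :=
  ∫ η, (excCount η k : ℝ) ∂(ProbabilityTheory.cond mu XhatSet)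

/-- `w_0 = 1 + Σ_k 2k ρ_k`: the mean excursion length. -/
noncomputable def w0of (mu : MeasureTheory.Measure Cfg) : ℝ :=
  1 + ∑' k : ℕ, 2 * (k : ℝ) * rhoK mu k

/-- `ρ̄_k = ρ_k / w_0`: the mean number of `k`-solitons per site. -/
noncomputable def rhoBar (mu : MeasureTheory.Measure Cfg) (k : ℕ) : ℝ :=
  rhoK mu k / w0of mu

/-- The leftmost site of a soliton. -/
noncomputable def leftmost (γ : Finset ℤ) : ℤ := sInf (γ : Set ℤ)

/-!
A Birkhoff sum telescopes: for every `g`,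
`g x + ∑_{i=1}^{n} g (T^[i] x) = ∑_{i=0}^{n-1} g (T^[i] x) + g (T^[n] x)`.
Taking `n = n x` and integrating against a finite measure `ν` preserved by `F x = T^[n x] x`, the
two boundary terms cancel, so moving the orbit segment one step forward does not change the
integral; this is the `T`-invariance of the inverse-Palm measure. A `T`-invariant set `A` is also
`F`-invariant, and it has inverse-Palm measure proportional to `∫_A n dν`, so triviality of `A` for
`ν` passes to the inverse-Palm measure.
-/

section OrbitSegments

variable {α : Type*} {T : α → α}

theorem preimage_iterate_eq_of_preimage_eq {A : Set α} (hA : T ⁻¹' A = A) (n : α → ℕ) :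
    (fun x ↦ T^[n x] x) ⁻¹' A = A := by
  ext x
  have hiter : T^[n x] ⁻¹' A = A := Function.IsFixedPt.preimage_iterate hA (n x)
  exact Set.ext_iff.mp hiter x

theorem add_birkhoffSum_apply_eq_birkhoffSum_add {M : Type*} [AddCommMonoid M] (g : α → M) (n : ℕ)
    (x : α) : g x + birkhoffSum T g n (T x) = birkhoffSum T g n x + g (T^[n] x) := by
  rw [← birkhoffSum_succ', birkhoffSum_succ]

theorem birkhoffSum_comp_self {M : Type*} [AddCommMonoid M] (g : α → M) (n : ℕ) (x : α) :
    birkhoffSum T (g ∘ T) n x = birkhoffSum T g n (T x) := by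
  simp only [birkhoffSum, Function.comp_apply, ← Function.iterate_succ_apply,
    ← Function.iterate_succ_apply']

variable [MeasurableSpace α] {n : α → ℕ} {ν : Measure α}

theorem lintegral_birkhoffSum_apply_eq (hF : MeasurePreserving (fun x ↦ T^[n x] x) ν ν)
    {g : α → ENNReal} (hg : Measurable g) (hfin : ∫⁻ x, g x ∂ν ≠ ⊤) :
    ∫⁻ x, birkhoffSum T g (n x) (T x) ∂ν = ∫⁻ x, birkhoffSum T g (n x) x ∂ν := by
  refine (ENNReal.add_right_inj hfin).mp ?_
  calc ∫⁻ x, g x ∂ν + ∫⁻ x, birkhoffSum T g (n x) (T x) ∂ν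
      = ∫⁻ x, g x + birkhoffSum T g (n x) (T x) ∂ν := (lintegral_add_left hg _).symm
    _ = ∫⁻ x, birkhoffSum T g (n x) x + g (T^[n x] x) ∂ν := by
      simp only [add_birkhoffSum_apply_eq_birkhoffSum_add]
    _ = ∫⁻ x, birkhoffSum T g (n x) x ∂ν + ∫⁻ x, g (T^[n x] x) ∂ν :=
      lintegral_add_right _ (hg.comp hF.measurable)
    _ = ∫⁻ x, g x ∂ν + ∫⁻ x, birkhoffSum T g (n x) x ∂ν := by
      rw [hF.lintegral_comp hg, add_comm]

/-- `μ` is `c` times the unnormalized inverse-Palm measure of `ν` along the orbit segments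
`T x, …, T^[n x] x`, that is, `μ A = c * ∫ #{1 ≤ i ≤ n x | T^[i] x ∈ A} ∂ν`. The Birkhoff sum
starts at `T x` because the segment excludes `x` itself. The constant `c` is left free; the
probability measure is obtained for `c = (∫ n ∂ν)⁻¹`. -/
def IsInversePalm (T : α → α) (n : α → ℕ) (c : ENNReal) (ν μ : Measure α) : Prop :=
  ∀ A : Set α, MeasurableSet A →
    μ A = c * ∫⁻ x, birkhoffSum T (A.indicator fun _ ↦ (1 : ENNReal)) (n x) (T x) ∂ν

namespace IsInversePalm

variable {c : ENNReal} {μ : Measure α}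

theorem measurePreserving [IsFiniteMeasure ν] (h : IsInversePalm T n c ν μ) (hT : Measurable T)
    (hF : MeasurePreserving (fun x ↦ T^[n x] x) ν ν) : MeasurePreserving T μ μ := by
  refine ⟨hT, Measure.ext fun A hA ↦ ?_⟩
  let f : α → ENNReal := A.indicator fun _ ↦ 1
  have hf : Measurable f := measurable_const.indicator hA
  have hfin : ∫⁻ x, (f ∘ T) x ∂ν ≠ ⊤ := by
    change ∫⁻ x, (T ⁻¹' A).indicator (fun _ ↦ 1) x ∂ν ≠ ⊤
    rw [lintegral_indicator_const (hT hA)]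
    finiteness
  calc μ.map T A = μ (T ⁻¹' A) := Measure.map_apply hT hA
    _ = c * ∫⁻ x, birkhoffSum T (f ∘ T) (n x) (T x) ∂ν := h _ (hT hA)
    _ = c * ∫⁻ x, birkhoffSum T (f ∘ T) (n x) x ∂ν := by
      rw [lintegral_birkhoffSum_apply_eq hF (hf.comp hT) hfin]
    _ = c * ∫⁻ x, birkhoffSum T f (n x) (T x) ∂ν := by simp only [birkhoffSum_comp_self]
    _ = μ A := (h A hA).symm

theorem measure_eq_mul_setLIntegral_of_preimage_eq (h : IsInversePalm T n c ν μ) {A : Set α}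
    (hA : MeasurableSet A) (hinv : T ⁻¹' A = A) : μ A = c * ∫⁻ x in A, n x ∂ν := by
  have hmem (x : α) : T x ∈ A ↔ x ∈ A := Set.ext_iff.mp hinv x
  have hcomp : (A.indicator fun _ ↦ (1 : ENNReal)) ∘ T = A.indicator fun _ ↦ 1 :=
    congrArg (fun s : Set α ↦ s.indicator fun _ ↦ (1 : ENNReal)) hinv
  have hsum (x : α) : birkhoffSum T (A.indicator fun _ ↦ (1 : ENNReal)) (n x) (T x)
      = A.indicator (fun x ↦ (n x : ENNReal)) x := by
    by_cases hx : x ∈ A <;> simp [birkhoffSum_of_comp_eq hcomp, hmem, hx]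
  simp only [h A hA, hsum, lintegral_indicator hA]

theorem ae_mem_of_preimage_eq (h : IsInversePalm T n c ν μ) {A : Set α} (hA : MeasurableSet A)
    (hinv : T ⁻¹' A = A) (hν : ∀ᵐ x ∂ν, x ∈ A) : ∀ᵐ x ∂μ, x ∈ A := by
  have hinv_compl : T ⁻¹' Aᶜ = Aᶜ := by rw [Set.preimage_compl, hinv]
  have hnull : ν Aᶜ = 0 := mem_ae_iff.mp hν
  have hμ : μ Aᶜ = 0 := by
    rw [h.measure_eq_mul_setLIntegral_of_preimage_eq hA.compl hinv_compl,
      setLIntegral_measure_zero _ _ hnull, mul_zero]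
  exact mem_ae_iff.mpr hμ

end IsInversePalm

theorem inverse_palm_ergodic_general {c : ENNReal} {μ : Measure α} [IsFiniteMeasure ν]
    (hT : Measurable T) (hF : Ergodic (fun x ↦ T^[n x] x) ν) (h : IsInversePalm T n c ν μ) :
    Ergodic T μ where
  toMeasurePreserving := h.measurePreserving hT hF.toMeasurePreserving
  aeconst_set A hA hinv := by
    have hconst := hF.aeconst_set hA (preimage_iterate_eq_of_preimage_eq hinv n)
    rw [eventuallyConst_set] at hconst ⊢
    have hinv_compl : T ⁻¹' Aᶜ = Aᶜ := by rw [Set.preimage_compl, hinv]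
    exact hconst.imp (h.ae_mem_of_preimage_eq hA hinv)
      (h.ae_mem_of_preimage_eq hA.compl hinv_compl)

end OrbitSegments

section Configurations

theorem measurable_shiftC : Measurable shiftC :=
  measurable_pi_lambda _ fun y ↦ measurable_pi_apply (y + 1)

theorem shiftC_iterate (k : ℕ) (η : Cfg) : shiftC^[k] η = shiftBy k η := by
  induction k generalizing η with
  | zero =>
    funext y
    simp only [Function.iterate_zero, id_eq, shiftBy, Nat.cast_zero, add_zero]
  | succ k ih =>
    rw [Function.iterate_succ_apply, ih]
    funext y
    simp only [shiftBy, shiftC, Nat.cast_succ, add_assoc]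

theorem rFirst_nonneg (η : Cfg) : 0 ≤ rFirst η := by
  unfold rFirst
  obtain hempty | hne := {x : ℤ | 1 ≤ x ∧ isRecord η x}.eq_empty_or_nonempty
  · simp [hempty]
  · exact le_csInf hne fun x hx ↦ zero_le_one.trans hx.1

theorem thetaHat_eq_iterate_shiftC : thetaHat = fun η ↦ shiftC^[(rFirst η).toNat] η := by
  funext η
  rw [shiftC_iterate, Int.toNat_of_nonneg (rFirst_nonneg η), thetaHat]

theorem sum_Icc_one_shiftBy_eq_birkhoffSum {M : Type*} [AddCommMonoid M] (g : Cfg → M) (b : ℤ)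
    (η : Cfg) :
    ∑ i ∈ Finset.Icc 1 b, g (shiftBy i η) = birkhoffSum shiftC g b.toNat (shiftC η) := by
  simp [birkhoffSum, Int.Icc_eq_finset_map, ← Function.iterate_succ_apply, shiftC_iterate,
    add_comm]

theorem PalmIdentity.isInversePalm {muhat mu : Measure Cfg} (h : PalmIdentity muhat mu) :
    IsInversePalm shiftC (fun η ↦ (rFirst η).toNat)
      (∫⁻ η, ((rFirst η).toNat : ENNReal) ∂muhat)⁻¹ muhat mu := by
  intro A hA
  simp only [h A hA, sum_Icc_one_shiftBy_eq_birkhoffSum]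

end Configurations

open MeasureTheory in
/-- **ergodicity of the inverse-Palm measure.** Let `μ̂` be a
probability measure on `𝒳̂`, invariant and ergodic under the record-shift `θ̂`,
with `μ̂(r) < ∞`.  Then its inverse-Palm measure `Palm(μ̂)` is ergodic under the
shift `θ`. -/
theorem inverse_palm_ergodic (muhat : Measure Cfg) [IsProbabilityMeasure muhat]
    (hsupp : muhat XhatSet = 1) (herg : Ergodic thetaHat muhat)
    (hr : ∫⁻ η, ((rFirst η).toNat : ENNReal) ∂muhat < ⊤)
    (mu : Measure Cfg) (hmu : PalmIdentity muhat mu) :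
    Ergodic shiftC mu :=
  inverse_palm_ergodic_general measurable_shiftC (thetaHat_eq_iterate_shiftC ▸ herg)
    hmu.isInversePalm
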